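/- For every ATRA₁ 𝒜 with alphabet Σ, the language L^saf(𝒜) is a safety language, i.e., a closed subset of the metric space of all data trees with alphabet Σ, and L^cos(𝒜) is a co-safety language, i.e., an open subset. Equivalently: for any data tree τ, if for every l > 0 there exists τ'_l ∈ L^saf(𝒜) whose l-prefix equals the l-prefix of τ, then τ ∈ L^saf(𝒜). -/

import Mathlib

/-! ## Trees and data trees -/

abbrev Node : Type := List Bool

/-- A (possibly infinite) data tree over alphabet `A`, with data from `ℕ`.
It is represented by the partial labelling functions on nonleaf nodes:
`label n = some a` iff `n` is a nonleaf node labelled `a`, and similarly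
`dlabel` gives the datum at each nonleaf node. -/
structure DataTree (A : Type) where
  label : Node → Option A
  dlabel : Node → Option ℕ
  root_nonleaf : (label []).isSome
  domain_eq : ∀ n : Node, (dlabel n).isSome ↔ (label n).isSome
  tree_cond : ∀ (n : Node) (d : Bool), (label (n ++ [d])).isSome → (label n).isSome

namespace DataTree
variable {A : Type}

def Nonleaf (τ : DataTree A) (n : Node) : Prop := (τ.label n).isSome

/-- The set of nodes: the root together with both children of every nonleaf node. -/
def Nodes (τ : DataTree A) : Set Node :=
  {n | n = [] ∨ ∃ m d, n = m ++ [d] ∧ τ.Nonleaf m}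

def Leaf (τ : DataTree A) (n : Node) : Prop := n ∈ τ.Nodes ∧ ¬ τ.Nonleaf n

def Finite (τ : DataTree A) : Prop := {n | τ.Nonleaf n}.Finite

end DataTree

/-- A (possibly infinite) tree over alphabet `A` (a data tree without data). -/
structure BTree (A : Type) where
  label : Node → Option A
  root_nonleaf : (label []).isSome
  tree_cond : ∀ (n : Node) (d : Bool), (label (n ++ [d])).isSome → (label n).isSome

namespace BTree
variable {A : Type}
def Nonleaf (t : BTree A) (n : Node) : Prop := (t.label n).isSome
def Nodes (t : BTree A) : Set Node :=
  {n | n = [] ∨ ∃ m d, n = m ++ [d] ∧ t.Nonleaf m}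
def Leaf (t : BTree A) (n : Node) : Prop := n ∈ t.Nodes ∧ ¬ t.Nonleaf n
def Finite (t : BTree A) : Prop := {n | t.Nonleaf n}.Finite
end BTree

/-- The underlying tree of a data tree (erasing the data). -/
def DataTree.toTree {A : Type} (τ : DataTree A) : BTree A :=
  ⟨τ.label, τ.root_nonleaf, τ.tree_cond⟩

/-- `τ` and `τ'` have equal `l`-prefixes: they agree on all nodes of length `< l`
(hence their restrictions to nodes of length `≤ l` coincide). -/
def EqPrefix {A : Type} (τ τ' : DataTree A) (l : ℕ) : Prop :=
  ∀ n : Node, n.length < l → τ.label n = τ'.label n ∧ τ.dlabel n = τ'.dlabel n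

open Classical in
/-- The distance between data trees: `0` if they are equal, and otherwise `1/l`
where `l` is least such that the `l`-prefixes are distinct. -/
noncomputable def treeDist {A : Type} (τ τ' : DataTree A) : ℝ :=
  if τ = τ' then 0 else ((sInf {l : ℕ | ¬ EqPrefix τ τ' l} : ℕ) : ℝ)⁻¹

/-! ## Forward alternating tree 1-register automata (ATRA₁) -/

/-- Positive Boolean formulae over `Q`: atoms `q(d, ↓)` / `q(d, ¬↓)` are
`atom q d true` / `atom q d false`, where `d : Bool` is the direction. -/
inductive PosBool (Q : Type) : Type
  | atom : Q → Bool → Bool → PosBool Q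
  | tt : PosBool Q
  | ff : PosBool Q
  | and : PosBool Q → PosBool Q → PosBool Q
  | or : PosBool Q → PosBool Q → PosBool Q

/-- Satisfaction of a positive Boolean formula by a quadruple
`R d u` of subsets of `Q` (`d` = direction, `u = true` means register update `↓`). -/
def PosBool.Sat {Q : Type} (R : Bool → Bool → Set Q) : PosBool Q → Prop
  | .atom q d u => q ∈ R d u
  | .tt => True
  | .ff => False
  | .and φ ψ => φ.Sat R ∧ ψ.Sat R
  | .or φ ψ => φ.Sat R ∨ ψ.Sat R

/-- The dual of a positive Boolean formula: swaps `⊤`/`⊥` and `∧`/`∨`. -/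
def PosBool.dual {Q : Type} : PosBool Q → PosBool Q
  | .atom q d u => .atom q d u
  | .tt => .ff
  | .ff => .tt
  | .and φ ψ => .or φ.dual ψ.dual
  | .or φ ψ => .and φ.dual ψ.dual

def PosBool.map {Q Q' : Type} (f : Q → Q') : PosBool Q → PosBool Q'
  | .atom q d u => .atom (f q) d u
  | .tt => .tt
  | .ff => .ff
  | .and φ ψ => .and (φ.map f) (ψ.map f)
  | .or φ ψ => .or (φ.map f) (ψ.map f)

/-- A forward alternating tree 1-register automaton. -/
structure ATRA (A : Type) where
  Q : Type
  fin : Finite Q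
  qI : Q
  F : Set Q
  δ : Q → A → Bool → PosBool Q

namespace ATRA
variable {A : Type}

/-- The transition relation between configurations (finite sets of threads),
relative to a letter `a` and a datum `E`. -/
def Trans (M : ATRA A) (a : A) (E : ℕ) (G H0 H1 : Set (M.Q × ℕ)) : Prop :=
  ∀ q D, (q, D) ∈ G →
    ∃ R : Bool → Bool → Set M.Q,
      (M.δ q a (decide (D = E))).Sat R ∧
      ∀ d : Bool,
        (∀ r ∈ R d true, (r, E) ∈ (if d then H1 else H0)) ∧
        (∀ r ∈ R d false, (r, D) ∈ (if d then H1 else H0))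

/-- A run of `M` on a data tree `τ`. -/
structure Run (M : ATRA A) (τ : DataTree A) where
  G : Node → Set (M.Q × ℕ)
  finite : ∀ n : Node, (G n).Finite
  support : ∀ n : Node, n ∉ τ.Nodes → G n = ∅
  init : ∃ D : ℕ, τ.dlabel [] = some D ∧ (M.qI, D) ∈ G []
  step : ∀ (n : Node) (a : A) (D : ℕ), τ.label n = some a → τ.dlabel n = some D →
    M.Trans a D (G n) (G (n ++ [false])) (G (n ++ [true]))

def Run.Final {M : ATRA A} {τ : DataTree A} (ρ : M.Run τ) : Prop :=
  ∀ n, τ.Leaf n → ∀ q D, (q, D) ∈ ρ.G n → q ∈ M.F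

def Run.FiniteRun {M : ATRA A} {τ : DataTree A} (ρ : M.Run τ) : Prop :=
  ∃ l : ℕ, ∀ n : Node, l ≤ n.length → ρ.G n = ∅

/-- The language of `M` over finite data trees. -/
def Lfin (M : ATRA A) : Set (DataTree A) :=
  {τ | τ.Finite ∧ ∃ ρ : M.Run τ, ρ.Final}

/-- The safety language of `M`: data trees on which `M` has a final run. -/
def Lsaf (M : ATRA A) : Set (DataTree A) :=
  {τ | ∃ ρ : M.Run τ, ρ.Final}

/-- The co-safety language of `M`: data trees on which `M` has a final finite run. -/
def Lcos (M : ATRA A) : Set (DataTree A) :=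
  {τ | ∃ ρ : M.Run τ, ρ.Final ∧ ρ.FiniteRun}

/-- The dual automaton: final states complemented, transition formulae dualised. -/
def dual (M : ATRA A) : ATRA A :=
  ⟨M.Q, M.fin, M.qI, M.Fᶜ, fun q a b => (M.δ q a b).dual⟩

end ATRA

/-- A set of data trees is safety iff it is closed in the prefix metric:
if every `l`-prefix of `τ` is shared with some member of `L`, then `τ ∈ L`. -/
def IsSafetyLang {A : Type} (L : Set (DataTree A)) : Prop :=
  ∀ τ : DataTree A, (∀ l : ℕ, 0 < l → ∃ τ' ∈ L, EqPrefix τ τ' l) → τ ∈ L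

theorem PosBool.sat_mono {Q : Type} {R S : Bool → Bool → Set Q}
    (h : ∀ d u, R d u ⊆ S d u) (φ : PosBool Q) (hs : φ.Sat R) : φ.Sat S := by
  induction φ with
  | atom q d u => exact h d u hs
  | tt => trivial
  | ff => exact hs
  | and φ ψ ih1 ih2 => exact ⟨ih1 hs.1, ih2 hs.2⟩
  | or φ ψ ih1 ih2 => exact hs.imp ih1 ih2

/-- Satisfaction passes to ultralimits. -/
theorem PosBool.sat_ultra {Q : Type} (U : Ultrafilter ℕ) (R : ℕ → Bool → Bool → Set Q)
    (φ : PosBool Q) (hs : ∀ᶠ l in (U : Filter ℕ), φ.Sat (R l)) :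
    φ.Sat (fun d u => {q | ∀ᶠ l in (U : Filter ℕ), q ∈ R l d u}) := by
  induction φ with
  | atom q d u => exact hs
  | tt => trivial
  | ff =>
    obtain ⟨l, hl⟩ := hs.exists
    exact hl
  | and φ ψ ih1 ih2 => exact ⟨ih1 (hs.mono fun l h => h.1), ih2 (hs.mono fun l h => h.2)⟩
  | or φ ψ ih1 ih2 => exact (Ultrafilter.eventually_or.1 hs).imp ih1 ih2

theorem EqPrefix.nodes_iff {A : Type} {τ τ' : DataTree A} {l : ℕ} (h : EqPrefix τ τ' l)
    {n : Node} (hn : n.length ≤ l) : n ∈ τ.Nodes ↔ n ∈ τ'.Nodes := by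
  have key : ∀ m d, n = m ++ [d] → (τ.Nonleaf m ↔ τ'.Nonleaf m) := by
    intro m d e
    have : m.length < l := by
      rw [e] at hn
      simp at hn
      omega
    unfold DataTree.Nonleaf
    rw [(h m this).1]
  constructor
  · rintro (e | ⟨m, d, e, hm⟩)
    · exact Or.inl e
    · exact Or.inr ⟨m, d, e, (key m d e).1 hm⟩
  · rintro (e | ⟨m, d, e, hm⟩)
    · exact Or.inl e
    · exact Or.inr ⟨m, d, e, (key m d e).2 hm⟩

theorem EqPrefix.leaf_iff {A : Type} {τ τ' : DataTree A} {l : ℕ} (h : EqPrefix τ τ' l)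
    {n : Node} (hn : n.length < l) : τ.Leaf n ↔ τ'.Leaf n := by
  unfold DataTree.Leaf
  rw [h.nodes_iff hn.le]
  unfold DataTree.Nonleaf
  rw [(h n hn).1]

/-- Data occurring on the path from the root to `n`. -/
def pathData {A : Type} (τ : DataTree A) (n : Node) : Set ℕ :=
  {D | ∃ m : Node, m <+: n ∧ τ.dlabel m = some D}

theorem pathData_finite {A : Type} (τ : DataTree A) (n : Node) : (pathData τ n).Finite := by
  have h : ((fun m : Node => (τ.dlabel m).getD 0) '' {m | m ∈ n.inits}).Finite :=
    (List.finite_toSet n.inits).image _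
  refine h.subset ?_
  rintro D ⟨m, hm, e⟩
  exact ⟨m, (List.mem_inits _ _).2 hm, by simp [e]⟩

theorem saf_closed {A : Type} (M : ATRA A) : IsSafetyLang M.Lsaf := by
  intro τ h
  have h' : ∀ l : ℕ, ∃ τ' : DataTree A, ∃ ρ : M.Run τ', ρ.Final ∧ EqPrefix τ τ' (l + 1) := by
    intro l
    obtain ⟨τ', ⟨ρ, hf⟩, e⟩ := h (l + 1) (Nat.succ_pos l)
    exact ⟨τ', ρ, hf, e⟩
  choose T ρ hfin hpre using h'
  let U : Ultrafilter ℕ := Filter.hyperfilter ℕ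
  have hU : ∀ k : ℕ, ∀ᶠ l in (U : Filter ℕ), k ≤ l := by
    intro k
    have : ∀ᶠ l in Filter.atTop, k ≤ l := Filter.eventually_ge_atTop k
    exact Nat.hyperfilter_le_atTop this
  have hfinQ := M.fin
  refine ⟨{ G := fun n => {p | p.2 ∈ pathData τ n ∧ ∀ᶠ l in (U : Filter ℕ), p ∈ (ρ l).G n}
            finite := ?_, support := ?_, init := ?_, step := ?_ }, ?_⟩
  · intro n
    refine (Set.Finite.prod (Set.finite_univ (α := M.Q)) (pathData_finite τ n)).subset ?_
    rintro p ⟨hp, -⟩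
    exact ⟨trivial, hp⟩
  · intro n hn
    ext p
    constructor
    · rintro ⟨-, hp⟩
      obtain ⟨l, hl, hkl⟩ := (hp.and (hU n.length)).exists
      rw [(ρ l).support n (fun hc => hn (((hpre l).nodes_iff (by omega)).2 hc))] at hl
      exact hl
    · exact fun hp => hp.elim
  · obtain ⟨D, hD⟩ := Option.isSome_iff_exists.1 ((τ.domain_eq []).2 τ.root_nonleaf)
    refine ⟨D, hD, ⟨[], List.prefix_rfl, hD⟩, Filter.Eventually.of_forall ?_⟩
    intro l
    obtain ⟨D', hD', hm⟩ := (ρ l).init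
    have e := ((hpre l) [] (by simp)).2
    rw [hD, hD'] at e
    cases e
    exact hm
  · rintro n a E ha hE q D ⟨hD, hev⟩
    let R : ℕ → Bool → Bool → Set M.Q :=
      fun l d u => {r | (r, if u then E else D) ∈ (ρ l).G (n ++ [d])}
    have hs : ∀ᶠ l in (U : Filter ℕ), (M.δ q a (decide (D = E))).Sat (R l) := by
      filter_upwards [hev, hU n.length] with l hl hk
      have e := (hpre l) n (by omega)
      obtain ⟨S, hS, hsub⟩ := (ρ l).step n a E (e.1 ▸ ha) (e.2 ▸ hE) q D hl
      refine PosBool.sat_mono ?_ _ hS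
      intro d u r hr
      cases d <;> cases u
      · exact (hsub false).2 r hr
      · exact (hsub false).1 r hr
      · exact (hsub true).2 r hr
      · exact (hsub true).1 r hr
    refine ⟨_, PosBool.sat_ultra U R _ hs, ?_⟩
    have hDp : ∀ d : Bool, D ∈ pathData τ (n ++ [d]) := by
      intro d
      obtain ⟨m, hm, e⟩ := hD
      exact ⟨m, hm.trans (List.prefix_append _ _), e⟩
    have hEp : ∀ d : Bool, E ∈ pathData τ (n ++ [d]) :=
      fun d => ⟨n, List.prefix_append _ _, hE⟩
    intro d
    cases d
    · exact ⟨fun r hr => ⟨hEp _, hr⟩, fun r hr => ⟨hDp _, hr⟩⟩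
    · exact ⟨fun r hr => ⟨hEp _, hr⟩, fun r hr => ⟨hDp _, hr⟩⟩
  · rintro n hn q D ⟨-, hev⟩
    obtain ⟨l, hl, hk⟩ := (hev.and (hU n.length)).exists
    exact hfin l n (((hpre l).leaf_iff (by omega)).1 hn) q D hl

theorem cos_open {A : Type} (M : ATRA A) : IsSafetyLang M.Lcosᶜ := by
  rintro τ h ⟨ρ, hfin, l, hl⟩
  obtain ⟨τ', hτ', e⟩ := h (l + 1) (Nat.succ_pos l)
  refine hτ' ⟨{ G := ρ.G, finite := ρ.finite, support := ?_, init := ?_, step := ?_ }, ?_, l, hl⟩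
  · intro n hn
    by_cases hk : l ≤ n.length
    · exact hl n hk
    · exact ρ.support n (fun hc => hn ((e.nodes_iff (by omega)).1 hc))
  · obtain ⟨D, hD, hm⟩ := ρ.init
    exact ⟨D, (e [] (by simp)).2 ▸ hD, hm⟩
  · intro n a D ha hD
    by_cases hk : l ≤ n.length
    · intro q D' hm
      rw [hl n hk] at hm
      exact hm.elim
    · have e' := e n (by omega)
      exact ρ.step n a D (e'.1.trans ha) (e'.2.trans hD)
  · intro n hn q D hm
    by_cases hk : l ≤ n.length
    · change (q, D) ∈ ρ.G n at hm
      rw [hl n hk] at hm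
      exact hm.elim
    · exact hfin n ((e.leaf_iff (by omega)).2 hn) q D hm

/-- For every ATRA₁, `L^saf(𝒜)` is a safety language (closed)
and `L^cos(𝒜)` is a co-safety language (its complement is a safety language). -/
theorem atra_saf_safety_cos_cosafety {A : Type} [Fintype A] (M : ATRA A) :
    IsSafetyLang M.Lsaf ∧ IsSafetyLang M.Lcosᶜ := by
  exact ⟨saf_closed M, cos_open M⟩
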